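/- For every pair ([k₁],[k₂]) of objects of Δ × Δ, the nerve of the comma category (diag ↓ ([k₁],[k₂])) is contractible (weakly equivalent to a point); consequently the diagonal functor diag : Δ → Δ × Δ is initial. -/

import Mathlib

open CategoryTheory SimplexCategory

/-- A simplicial set is weakly contractible iff its geometric realization is
homotopy equivalent to a point (realizations are CW complexes, so this agrees
with weak contractibility by Whitehead's theorem). -/
def WeaklyContractibleSSet (K : SSet.{0}) : Prop :=
  Nonempty (ContinuousMap.HomotopyEquiv (SSet.toTop.obj K) (TopCat.of PUnit.{1}))

namespace DiagInit

lemma map_apply' {X Y : Type*} [Fintype X] [Fintype Y] [DecidableEq Y] (f : X → Y)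
    (p : stdSimplex ℝ X) (y : Y) : stdSimplex.map f p y = ∑ x, if f x = y then p x else 0 := by
  rw [stdSimplex.map_coe, FunOnFinite.linearMap_apply_apply, Finset.sum_filter]

lemma map_congr_supp {X Y : Type*} [Fintype X] [Fintype Y] {f g : X → Y}
    {p : stdSimplex ℝ X} (h : ∀ x, p x ≠ 0 → f x = g x) :
    stdSimplex.map f p = stdSimplex.map g p := by
  classical
  ext y
  rw [map_apply', map_apply']
  refine Finset.sum_congr rfl fun x _ => ?_
  by_cases hx : p x = 0
  · simp [hx]
  · rw [h x hx]

lemma exists_of_map_ne {X Y : Type*} [Fintype X] [Fintype Y] {f : X → Y}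
    {p : stdSimplex ℝ X} {y : Y} (h : stdSimplex.map f p y ≠ 0) : ∃ x, p x ≠ 0 ∧ f x = y := by
  classical
  rw [map_apply'] at h
  obtain ⟨x, -, hx⟩ := Finset.exists_ne_zero_of_sum_ne_zero h
  refine ⟨x, ?_, ?_⟩ <;> aesop

lemma map_ne {X Y : Type*} [Fintype X] [Fintype Y] {f : X → Y}
    {p : stdSimplex ℝ X} {x : X} (h : p x ≠ 0) : stdSimplex.map f p (f x) ≠ 0 := by
  classical
  rw [map_apply']
  apply ne_of_gt
  refine Finset.sum_pos' (fun i _ => ?_) ⟨x, Finset.mem_univ _, ?_⟩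
  · split_ifs <;> simp
  · simpa using lt_of_le_of_ne (stdSimplex.zero_le p x) h.symm

lemma exists_supp {X : Type*} [Fintype X] (p : stdSimplex ℝ X) : ∃ x, p x ≠ 0 := by
  by_contra! h
  have := stdSimplex.sum_eq_one p
  simp [h] at this

/-- Monotone retraction onto a nonempty subset of a finite ordinal. -/
lemma exists_retract {N : ℕ} (A : Finset (Fin (N + 1))) (hA : A.Nonempty) :
    ∃ ρ : Fin (N + 1) →o Fin (N + 1), (∀ k, ρ k ∈ A) ∧ ∀ k ∈ A, ρ k = k := by
  classical
  let B : Fin (N + 1) → Finset (Fin (N + 1)) := fun k => insert (A.min' hA) (A.filter (· ≤ k))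
  have hB : ∀ k, (B k).Nonempty := fun k => Finset.insert_nonempty _ _
  refine ⟨⟨fun k => (B k).max' (hB k), ?_⟩, ?_, ?_⟩
  · intro k l h
    apply Finset.max'_subset
    intro x
    simp only [B, Finset.mem_insert, Finset.mem_filter]
    rintro (h1 | h1)
    · exact Or.inl h1
    · exact Or.inr ⟨h1.1, h1.2.trans h⟩
  · intro k
    have := (B k).max'_mem (hB k)
    change (B k).max' (hB k) ∈ A
    generalize (B k).max' (hB k) = z at *
    simp only [B, Finset.mem_insert, Finset.mem_filter] at this
    rcases this with h | h
    · rw [h]; exact A.min'_mem hA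
    · exact h.1
  · intro k hk
    change (B k).max' (hB k) = k
    apply le_antisymm
    · apply Finset.max'_le
      intro y
      simp only [B, Finset.mem_insert, Finset.mem_filter]
      rintro (h1 | h1)
      · rw [h1]; exact A.min'_le _ hk
      · exact h1.2
    · apply Finset.le_max'
      simp [B, hk]

/-- Comonotone couplings are determined by their marginals. -/
lemma coupling_lower {n : ℕ} (μ : stdSimplex ℝ (Fin (n + 1) × Fin 2))
    (hμ : ∀ x y, μ x ≠ 0 → μ y ≠ 0 → x ≤ y ∨ y ≤ x) (L : Finset (Fin (n + 1)))
    (hL : ∀ a b, b ≤ a → a ∈ L → b ∈ L) :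
    ∑ a ∈ L, μ (a, 0) =
      min (∑ a ∈ L, stdSimplex.map Prod.fst μ a) (stdSimplex.map Prod.snd μ 0) := by
  have h1 : ∀ a, stdSimplex.map Prod.fst μ a = μ (a, 0) + μ (a, 1) := by
    intro a
    rw [map_apply', Fintype.sum_prod_type, Finset.sum_eq_single a]
    · simp
    · intro b _ hb; simp [hb]
    · simp
  have h2 : stdSimplex.map Prod.snd μ 0 = ∑ a, μ (a, 0) := by
    rw [map_apply', Fintype.sum_prod_type]
    simp
  simp only [h1, h2, Finset.sum_add_distrib]
  have e1 : 0 ≤ ∑ a ∈ L, μ (a, 1) := Finset.sum_nonneg (by simp)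
  have e2 : ∑ a ∈ L, μ (a, 0) ≤ ∑ a, μ (a, 0) :=
    Finset.sum_le_sum_of_subset_of_nonneg (Finset.subset_univ _) (by simp)
  by_cases h : ∃ a ∈ L, μ (a, 1) ≠ 0
  · obtain ⟨a, ha, hne⟩ := h
    have : ∑ a ∈ L, μ (a, 0) = ∑ a, μ (a, 0) := by
      apply Finset.sum_subset (Finset.subset_univ _)
      intro b _ hb
      by_contra hb0
      rcases hμ _ _ hne hb0 with h | h
      · simp [Prod.le_def] at h
      · exact hb (hL _ _ h.1 ha)
    rw [min_eq_right] <;> linarith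
  · push Not at h
    rw [Finset.sum_eq_zero h, add_zero, min_eq_left e2]

lemma coupling_unique {n : ℕ} (μ ν : stdSimplex ℝ (Fin (n + 1) × Fin 2))
    (hμ : ∀ x y, μ x ≠ 0 → μ y ≠ 0 → x ≤ y ∨ y ≤ x)
    (hν : ∀ x y, ν x ≠ 0 → ν y ≠ 0 → x ≤ y ∨ y ≤ x)
    (h1 : stdSimplex.map Prod.fst μ = stdSimplex.map Prod.fst ν)
    (h2 : stdSimplex.map Prod.snd μ = stdSimplex.map Prod.snd ν) : μ = ν := by
  have h0 : ∀ a, μ (a, 0) = ν (a, 0) := by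
    intro a
    have A := (coupling_lower μ hμ (Finset.Iic a) (by simpa using fun a b h h' => h.trans h')).trans
      ((coupling_lower ν hν (Finset.Iic a) (by simpa using fun a b h h' => h.trans h')).trans
        (by rw [h1, h2])).symm
    have B := (coupling_lower μ hμ (Finset.Iio a)
        (by simpa using fun a b h h' => lt_of_le_of_lt h h')).trans
      ((coupling_lower ν hν (Finset.Iio a)
        (by simpa using fun a b h h' => lt_of_le_of_lt h h')).trans (by rw [h1, h2])).symm
    rw [← Finset.Iio_insert, Finset.sum_insert (by simp), Finset.sum_insert (by simp)] at A
    linarith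
  have e : ∀ (μ : stdSimplex ℝ (Fin (n + 1) × Fin 2)) a,
      stdSimplex.map Prod.fst μ a = μ (a, 0) + μ (a, 1) := by
    intro μ a
    rw [map_apply', Fintype.sum_prod_type, Finset.sum_eq_single a]
    · simp
    · intro b _ hb; simp [hb]
    · simp
  ext ⟨a, b⟩
  fin_cases b
  · exact h0 a
  · have := e μ a
    rw [h1, e, h0] at this
    simp at this ⊢
    exact this.symm

lemma chain_map {N : ℕ} {P : Type*} [PartialOrder P] [Fintype P] (α : Fin (N + 1) →o P)
    (p : stdSimplex ℝ (Fin (N + 1))) (x y : P) (hx : stdSimplex.map α p x ≠ 0)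
    (hy : stdSimplex.map α p y ≠ 0) : x ≤ y ∨ y ≤ x := by
  obtain ⟨a, -, rfl⟩ := exists_of_map_ne hx
  obtain ⟨b, -, rfl⟩ := exists_of_map_ne hy
  exact (le_total a b).imp (fun h => α.monotone h) (fun h => α.monotone h)

lemma pair_unique {n N M : ℕ} (φ : Fin (N + 1) →o Fin (n + 1)) (χ : Fin (N + 1) →o Fin 2)
    (φ' : Fin (M + 1) →o Fin (n + 1)) (χ' : Fin (M + 1) →o Fin 2)
    (p : stdSimplex ℝ (Fin (N + 1))) (q : stdSimplex ℝ (Fin (M + 1)))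
    (h1 : stdSimplex.map φ p = stdSimplex.map φ' q)
    (h2 : stdSimplex.map χ p = stdSimplex.map χ' q) :
    stdSimplex.map (φ.prod χ) p = stdSimplex.map (φ'.prod χ') q := by
  apply coupling_unique _ _ (chain_map _ _) (chain_map _ _)
  · rw [stdSimplex.map_comp_apply, stdSimplex.map_comp_apply]
    exact h1
  · rw [stdSimplex.map_comp_apply, stdSimplex.map_comp_apply]
    exact h2

lemma chain_exists {P : Type*} [PartialOrder P] (S : Finset P)
    (hS : S.Nonempty) (hc : ∀ x ∈ S, ∀ y ∈ S, x ≤ y ∨ y ≤ x) :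
    ∃ (r : ℕ) (c : Fin (r + 1) ↪o P), ∀ x, x ∈ S ↔ ∃ i, c i = x := by
  let T : Finset (LinearExtension P) := S
  obtain ⟨r, hr⟩ : ∃ r, T.card = r + 1 := ⟨T.card - 1, by
    have : 0 < T.card := Finset.card_pos.2 hS
    omega⟩
  let e := T.orderEmbOfFin hr
  have hmem : ∀ i, (e i : P) ∈ S := fun i => T.orderEmbOfFin_mem hr i
  have hle : ∀ i j, (show P from e i) ≤ (show P from e j) ↔ i ≤ j := by
    intro i j
    constructor
    · intro h
      exact e.le_iff_le.1 ((toLinearExtension (α := P)).monotone h)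
    · intro h
      rcases hc _ (hmem i) _ (hmem j) with h' | h'
      · exact h'
      · have h3 : e j ≤ e i := (toLinearExtension (α := P)).monotone h'
        have := e.le_iff_le.1 h3
        rw [le_antisymm h this]
  refine ⟨r, OrderEmbedding.ofMapLEIff (fun i => (show P from e i)) hle, fun x => ?_⟩
  have := T.range_orderEmbOfFin hr
  have h3 : x ∈ (T : Set (LinearExtension P)) ↔ ∃ i, e i = x := by rw [← this]; rfl
  exact h3

/-- Surjectivity of the prism decomposition. -/
lemma prism_surj {n : ℕ} (t : stdSimplex ℝ (Fin (n + 1))) (s : stdSimplex ℝ (Fin 2)) :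
    ∃ (φ : Fin (n + 2) →o Fin (n + 1)) (χ : Fin (n + 2) →o Fin 2)
      (p : stdSimplex ℝ (Fin (n + 2))), stdSimplex.map φ p = t ∧ stdSimplex.map χ p = s := by
  have hex : ∃ i : Fin (n + 1), s 0 ≤ ∑ a ∈ Finset.Iic i, t a := by
    refine ⟨Fin.last n, ?_⟩
    have : Finset.Iic (Fin.last n) = Finset.univ := by ext; simp [Fin.le_last]
    rw [this, stdSimplex.sum_eq_one]
    simp
  obtain ⟨i, hi, hmin⟩ : ∃ i : Fin (n + 1), s 0 ≤ ∑ a ∈ Finset.Iic i, t a ∧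
      ∑ a ∈ Finset.Iio i, t a ≤ s 0 := by
    classical
    let A : Finset (Fin (n + 1)) := Finset.univ.filter fun i => s 0 ≤ ∑ a ∈ Finset.Iic i, t a
    have hA : A.Nonempty := by
      obtain ⟨i, hi⟩ := hex
      exact ⟨i, by simpa [A] using hi⟩
    refine ⟨A.min' hA, (Finset.mem_filter.1 (A.min'_mem hA)).2, ?_⟩
    have hlt : ∀ j, j < A.min' hA → ∑ a ∈ Finset.Iic j, t a ≤ s 0 := by
      intro j hj
      by_contra! h
      exact absurd (A.min'_le j (by simpa [A] using h.le)) (not_le.2 hj)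
    generalize A.min' hA = i at *
    rcases Fin.eq_zero_or_eq_succ i with rfl | ⟨j, rfl⟩
    · have : Finset.Iio (0 : Fin (n + 1)) = ∅ := by ext; simp
      rw [this]; simp
    · have : Finset.Iio j.succ = Finset.Iic j.castSucc := by
        ext x; simp [Fin.lt_def, Fin.le_def]
      rw [this]
      exact hlt _ (by simp [Fin.lt_def])
  have hIic : ∑ a ∈ Finset.Iic i, t a = t i + ∑ a ∈ Finset.Iio i, t a := by
    rw [← Finset.Iio_insert, Finset.sum_insert (by simp)]
  let v : Fin (n + 1) → ℝ := Function.update (⇑t) i (s 0 - ∑ a ∈ Finset.Iio i, t a)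
  let w : ℝ := ∑ a ∈ Finset.Iic i, t a - s 0
  let f : Fin (n + 2) → ℝ := Fin.insertNth (α := fun _ => ℝ) i.succ w v
  have f1 : f i.succ = w := by simp [f]
  have f2 : ∀ k, f (i.succ.succAbove k) = v k := fun k => by simp [f]
  have hv : ∀ k, v k = if k = i then s 0 - ∑ a ∈ Finset.Iio i, t a else t k := by
    intro k; simp [v, Function.update_apply]
  have g1 : ∀ k, i.predAbove (i.succ.succAbove k) = k := by
    intro k
    rcases le_or_gt k i with h | h
    · rw [Fin.succAbove_of_castSucc_lt _ _ (Fin.castSucc_lt_succ_iff.2 h),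
        Fin.predAbove_castSucc_of_le _ _ h]
    · rw [Fin.succAbove_of_le_castSucc _ _ (Fin.succ_le_castSucc_iff.2 h),
        Fin.predAbove_succ_of_le _ _ h.le]
  have key : ∀ k, v k + (if i = k then w else 0) = t k := by
    intro k
    rw [hv]
    by_cases h : k = i
    · subst h; simp [w]; linarith
    · simp [h, Ne.symm h]
  have hf : f ∈ stdSimplex ℝ (Fin (n + 2)) := by
    constructor
    · intro k
      rcases Fin.eq_self_or_eq_succAbove i.succ k with rfl | ⟨k, rfl⟩
      · rw [f1]; exact sub_nonneg.2 hi
      · rw [f2, hv]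
        split_ifs
        · exact sub_nonneg.2 hmin
        · simp
    · rw [Fin.sum_univ_succAbove _ i.succ, f1]
      simp only [f2]
      rw [← stdSimplex.sum_eq_one t]
      simp only [← key, Finset.sum_add_distrib]
      simp [add_comm]
  let p : stdSimplex ℝ (Fin (n + 2)) := ⟨f, hf⟩
  have hp : ∀ k, p k = f k := fun _ => rfl
  let χ : Fin (n + 2) →o Fin 2 := ⟨fun k => if k ≤ i.castSucc then 0 else 1, by
    intro a b h
    dsimp only
    split_ifs with h1 h2
    · exact le_rfl
    · exact Fin.zero_le _
    · exact absurd (h.trans ‹_›) h1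
    · exact le_rfl⟩
  refine ⟨⟨i.predAbove, Fin.predAbove_right_monotone i⟩, χ, p, ?_, ?_⟩
  · ext k
    rw [map_apply', Fin.sum_univ_succAbove _ i.succ]
    simp only [hp, f1, f2, OrderHom.coe_mk, g1, Fin.predAbove_succ_self]
    rw [← key k, add_comm]
    simp
  · have hχ : ∀ k, χ (i.succ.succAbove k) = if k ≤ i then 0 else 1 := by
      intro k
      have : i.succ.succAbove k ≤ i.castSucc ↔ k ≤ i := by
        rcases le_or_gt k i with h | h
        · rw [Fin.succAbove_of_castSucc_lt _ _ (Fin.castSucc_lt_succ_iff.2 h)]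
          simp
        · rw [Fin.succAbove_of_le_castSucc _ _ (Fin.succ_le_castSucc_iff.2 h)]
          exact iff_of_false (not_le.2 (Fin.castSucc_lt_succ_iff.2 h.le)) (not_le.2 h)
      change (if i.succ.succAbove k ≤ i.castSucc then (0 : Fin 2) else 1) = _
      simp only [this]
    have hχ1 : χ i.succ = 1 := by
      simp [χ, Fin.le_def]
    have z : stdSimplex.map χ p 0 = s 0 := by
      rw [map_apply', Fin.sum_univ_succAbove _ i.succ]
      simp only [hp, f1, f2, hχ, hχ1]
      have : ∀ k, (if (if k ≤ i then (0 : Fin 2) else 1) = 0 then v k else 0)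
          = if k ∈ Finset.Iic i then v k else 0 := by
        intro k
        by_cases h : k ≤ i <;> simp [h]
      simp only [this]
      rw [Finset.sum_ite_mem, Finset.univ_inter, ← Finset.Iio_insert,
        Finset.sum_insert (by simp)]
      have : ∑ k ∈ Finset.Iio i, v k = ∑ k ∈ Finset.Iio i, t k := by
        refine Finset.sum_congr rfl fun k hk => ?_
        rw [hv, if_neg (ne_of_lt (Finset.mem_Iio.1 hk))]
      rw [this, hv]
      simp
    ext k
    fin_cases k
    · exact z
    · have a1 := stdSimplex.add_eq_one s
      have a2 := stdSimplex.add_eq_one (stdSimplex.map χ p)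
      change stdSimplex.map χ p 1 = s 1
      linarith

end DiagInit
namespace DiagInit

open Opposite Simplicial

/-- The unit of the realization adjunction. -/
noncomputable def un (Z : SSet.{0}) : Z ⟶ TopCat.toSSet.obj (SSet.toTop.obj Z) :=
  sSetTopAdj.unit.app Z

/-- The characteristic map of a simplex in the realization. -/
noncomputable def ev {Z : SSet.{0}} {n : SimplexCategory} (z : Z.obj (op n)) :
    C(stdSimplex ℝ (Fin (n.len + 1)), SSet.toTop.obj Z) :=
  TopCat.toSSetObjEquiv (SSet.toTop.obj Z) (op n) ((un Z).app (op n) z)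

lemma sing_map {W : TopCat.{0}} {m n : SimplexCategory} (θ : m ⟶ n)
    (w : (TopCat.toSSet.obj W).obj (op n)) (p : stdSimplex ℝ (Fin (m.len + 1))) :
    TopCat.toSSetObjEquiv W (op m) ((TopCat.toSSet.obj W).map θ.op w) p =
      TopCat.toSSetObjEquiv W (op n) w (stdSimplex.map θ.toOrderHom p) := rfl

lemma nat_app {Z Y : SSet.{0}} (f : Z ⟶ Y) {m n : SimplexCategory} (θ : m ⟶ n)
    (z : Z.obj (op n)) : f.app (op m) (Z.map θ.op z) = Y.map θ.op (f.app (op n) z) :=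
  NatTrans.naturality_apply f θ.op z

lemma ev_map {Z : SSet.{0}} {m n : SimplexCategory} (θ : m ⟶ n) (z : Z.obj (op n))
    (p : stdSimplex ℝ (Fin (m.len + 1))) :
    ev (Z.map θ.op z) p = ev z (stdSimplex.map θ.toOrderHom p) := by
  unfold ev
  rw [nat_app]
  exact sing_map _ _ _

/-- The value of a map from the realization of the nerve of a poset depends only on the
pushforward. -/
lemma val_eq {Z : SSet.{0}} {P : Type} [PartialOrder P] [Fintype P]
    (y : ∀ N : SimplexCategory, (Fin (N.len + 1) →o P) → Z.obj (op N))
    (hy : ∀ {M N : SimplexCategory} (θ : M ⟶ N) (α : Fin (N.len + 1) →o P),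
      Z.map θ.op (y N α) = y M (α.comp θ.toOrderHom))
    {N M : SimplexCategory} (α : Fin (N.len + 1) →o P) (β : Fin (M.len + 1) →o P)
    (p : stdSimplex ℝ (Fin (N.len + 1))) (q : stdSimplex ℝ (Fin (M.len + 1)))
    (h : stdSimplex.map α p = stdSimplex.map β q) :
    ev (y N α) p = ev (y M β) q := by
  classical
  let S : Finset P := Finset.univ.filter fun x => stdSimplex.map α p x ≠ 0
  have hS : S.Nonempty := by
    obtain ⟨x, hx⟩ := exists_supp (stdSimplex.map α p)
    exact ⟨x, Finset.mem_filter.2 ⟨Finset.mem_univ _, hx⟩⟩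
  obtain ⟨r, c, hc⟩ := chain_exists S hS (fun x hx y hy =>
    chain_map α p x y (Finset.mem_filter.1 hx).2 (Finset.mem_filter.1 hy).2)
  have main : ∀ (L : SimplexCategory) (γ : Fin (L.len + 1) →o P)
      (u : stdSimplex ℝ (Fin (L.len + 1))) (_ : stdSimplex.map γ u = stdSimplex.map α p),
      ∃ v : stdSimplex ℝ (Fin (r + 1)),
        ev (y L γ) u = ev (y ⦋r⦌ (OrderHomClass.toOrderHom c)) v ∧
          stdSimplex.map c v = stdSimplex.map α p := by
    intro L γ u hu
    obtain ⟨k, hk⟩ := exists_supp u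
    obtain ⟨ρ, hρ1, hρ2⟩ := exists_retract (Finset.univ.filter fun k => u k ≠ 0)
      ⟨k, by simpa using hk⟩
    have hρ : stdSimplex.map ρ u = u := by
      conv_rhs => rw [← stdSimplex.map_id_apply u]
      apply map_congr_supp
      intro x hx
      exact hρ2 x (by simpa using hx)
    have hmem : ∀ k, ∃ i, c i = γ (ρ k) := by
      intro k
      rw [← hc]
      have := hρ1 k
      simp only [Finset.mem_filter, Finset.mem_univ, true_and] at this
      simp only [S, Finset.mem_filter, Finset.mem_univ, true_and]
      rw [← hu]
      exact map_ne this
    choose g hg using hmem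
    let G : Fin (L.len + 1) →o Fin (r + 1) := ⟨g, by
      intro a b hab
      rw [← c.le_iff_le, hg, hg]
      exact γ.monotone (ρ.monotone hab)⟩
    have e1 : γ.comp ρ = (OrderHomClass.toOrderHom c).comp G := by
      ext k
      exact (hg k).symm
    refine ⟨stdSimplex.map G u, ?_, ?_⟩
    · have a1 : ev (y L γ) u = ev (y L (γ.comp ρ)) u := by
        conv_lhs => rw [← hρ]
        have := ev_map (SimplexCategory.Hom.mk ρ) (y L γ) u
        rw [hy] at this
        exact this.symm
      rw [a1, e1]
      have := ev_map (Z := Z) (SimplexCategory.Hom.mk (a := L) (b := ⦋r⦌) G)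
        (y ⦋r⦌ (OrderHomClass.toOrderHom c)) u
      rw [hy] at this
      exact this
    · rw [stdSimplex.map_comp_apply, ← hu]
      have : (⇑c ∘ ⇑G) = ⇑(γ.comp ρ) := by rw [e1]; rfl
      change stdSimplex.map (⇑c ∘ ⇑G) u = _
      rw [this]
      conv_rhs => rw [← hρ]
      rw [stdSimplex.map_comp_apply]
      rfl
  obtain ⟨v, h1, h2⟩ := main N α p rfl
  obtain ⟨w, h3, h4⟩ := main M β q h.symm
  rw [h1, h3]
  congr 1
  have hinv : Function.LeftInverse (Function.invFun c) c := Function.leftInverse_invFun c.injective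
  have hid : ∀ x : stdSimplex ℝ (Fin (r + 1)),
      stdSimplex.map (Function.invFun c) (stdSimplex.map c x) = x := by
    intro x
    rw [stdSimplex.map_comp_apply, hinv.comp_eq_id, stdSimplex.map_id_apply]
  rw [← hid v, h2, ← h4, hid]

/-- Homotopy data given by a natural family. -/
structure Prism {X Z : SSet.{0}} (F G : X ⟶ Z) where
  y : ∀ {n N : SimplexCategory} (_ : X.obj (op n)) (_ : N ⟶ n) (_ : N ⟶ ⦋1⦌), Z.obj (op N)
  hy : ∀ {n N M : SimplexCategory} (x : X.obj (op n)) (φ : N ⟶ n) (χ : N ⟶ ⦋1⦌) (θ : M ⟶ N),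
    Z.map θ.op (y x φ χ) = y x (θ ≫ φ) (θ ≫ χ)
  hx : ∀ {n N m : SimplexCategory} (x : X.obj (op n)) (θ : m ⟶ n) (φ : N ⟶ m) (χ : N ⟶ ⦋1⦌),
    y (X.map θ.op x) φ χ = y x (φ ≫ θ) χ
  h0 : ∀ {n : SimplexCategory} (x : X.obj (op n)),
    y x (𝟙 n) (SimplexCategory.Hom.mk (OrderHom.const _ 0)) = F.app (op n) x
  h1 : ∀ {n : SimplexCategory} (x : X.obj (op n)),
    y x (𝟙 n) (SimplexCategory.Hom.mk (OrderHom.const _ 1)) = G.app (op n) x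

namespace Prism

variable {X Z : SSet.{0}} {F G : X ⟶ Z} (H : Prism F G)

lemma val_eq {n N M : SimplexCategory} (x : X.obj (op n)) (φ : N ⟶ n) (χ : N ⟶ ⦋1⦌)
    (φ' : M ⟶ n) (χ' : M ⟶ ⦋1⦌)
    (p : stdSimplex ℝ (Fin (N.len + 1))) (q : stdSimplex ℝ (Fin (M.len + 1)))
    (h1 : stdSimplex.map φ.toOrderHom p = stdSimplex.map φ'.toOrderHom q)
    (h2 : stdSimplex.map χ.toOrderHom p = stdSimplex.map χ'.toOrderHom q) :
    ev (H.y x φ χ) p = ev (H.y x φ' χ') q := by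
  have e : ∀ {a b : SimplexCategory} (f : a ⟶ b), SimplexCategory.Hom.mk f.toOrderHom = f :=
    fun f => rfl
  have := DiagInit.val_eq (P := Fin (n.len + 1) × Fin 2)
    (fun N α => H.y x (SimplexCategory.Hom.mk (OrderHom.fst.comp α))
      (SimplexCategory.Hom.mk (b := ⦋1⦌) (OrderHom.snd.comp α)))
    (fun θ α => H.hy _ _ _ θ) (φ.toOrderHom.prod χ.toOrderHom) (φ'.toOrderHom.prod χ'.toOrderHom)
    p q (pair_unique _ _ _ _ p q h1 h2)
  have e1 : SimplexCategory.Hom.mk (OrderHom.fst.comp (φ.toOrderHom.prod χ.toOrderHom)) = φ := by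
    apply SimplexCategory.Hom.ext; apply OrderHom.ext; rfl
  have e2 : SimplexCategory.Hom.mk (a := N) (b := ⦋1⦌)
      (OrderHom.snd.comp (φ.toOrderHom.prod χ.toOrderHom)) = χ := by
    apply SimplexCategory.Hom.ext; apply OrderHom.ext; rfl
  have e3 : SimplexCategory.Hom.mk (OrderHom.fst.comp (φ'.toOrderHom.prod χ'.toOrderHom)) = φ' := by
    apply SimplexCategory.Hom.ext; apply OrderHom.ext; rfl
  have e4 : SimplexCategory.Hom.mk (a := M) (b := ⦋1⦌)
      (OrderHom.snd.comp (φ'.toOrderHom.prod χ'.toOrderHom)) = χ' := by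
    apply SimplexCategory.Hom.ext; apply OrderHom.ext; rfl
  conv at this =>
    rw [e1, e2, e3, e4]
  exact this

lemma surj {n : SimplexCategory} (ts : stdSimplex ℝ (Fin (n.len + 1)) × stdSimplex ℝ (Fin 2)) :
    ∃ (i : (Fin (n.len + 2) →o Fin (n.len + 1)) × (Fin (n.len + 2) →o Fin 2))
      (p : stdSimplex ℝ (Fin (n.len + 2))),
      (stdSimplex.map i.1 p, stdSimplex.map i.2 p) = ts := by
  obtain ⟨φ, χ, p, h1, h2⟩ := prism_surj ts.1 ts.2
  exact ⟨⟨φ, χ⟩, p, Prod.ext h1 h2⟩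

abbrev Idx (n : SimplexCategory) : Type :=
  (Fin (n.len + 2) →o Fin (n.len + 1)) × (Fin (n.len + 2) →o Fin 2)

noncomputable def E (n : SimplexCategory) (a : Σ _ : Idx n, stdSimplex ℝ (Fin (n.len + 2))) :
    stdSimplex ℝ (Fin (n.len + 1)) × stdSimplex ℝ (Fin 2) :=
  (stdSimplex.map a.1.1 a.2, stdSimplex.map a.1.2 a.2)

lemma E_quot (n : SimplexCategory) : Topology.IsQuotientMap (E n) := by
  have : Finite (Idx n) := by
    have h1 : Finite (Fin (n.len + 2) →o Fin (n.len + 1)) := DFunLike.finite _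
    have h2 : Finite (Fin (n.len + 2) →o Fin 2) := DFunLike.finite _
    infer_instance
  have hc : Continuous (E n) := by
    apply continuous_sigma
    intro i
    have c1 : Continuous (stdSimplex.map (S := ℝ) i.1) := stdSimplex.continuous_map (⇑i.1)
    have c2 : Continuous (stdSimplex.map (S := ℝ) i.2) := stdSimplex.continuous_map (⇑i.2)
    exact c1.prodMk c2
  refine Topology.IsQuotientMap.of_surjective_continuous ?_ hc
  intro ts
  obtain ⟨i, p, h⟩ := surj ts
  exact ⟨⟨i, p⟩, h⟩

noncomputable def Efun {n : SimplexCategory} (x : X.obj (op n))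
    (a : Σ _ : Idx n, stdSimplex ℝ (Fin (n.len + 2))) : SSet.toTop.obj Z :=
  ev (H.y (N := ⦋n.len + 1⦌) x (SimplexCategory.Hom.mk a.1.1)
    (SimplexCategory.Hom.mk (b := ⦋1⦌) a.1.2)) a.2

noncomputable def EfunC {n : SimplexCategory} (x : X.obj (op n)) :
    C(Σ _ : Idx n, stdSimplex ℝ (Fin (n.len + 2)), SSet.toTop.obj Z) :=
  ⟨H.Efun x, by
      apply continuous_sigma
      intro i
      exact (ev (H.y (N := ⦋n.len + 1⦌) x (SimplexCategory.Hom.mk i.1)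
        (SimplexCategory.Hom.mk (b := ⦋1⦌) i.2))).continuous⟩

lemma Efun_eq {n : SimplexCategory} (x : X.obj (op n))
    (a b : Σ _ : Idx n, stdSimplex ℝ (Fin (n.len + 2))) (hab : E n a = E n b) :
    H.Efun x a = H.Efun x b :=
  H.val_eq x _ _ _ _ _ _ (congrArg Prod.fst hab) (congrArg Prod.snd hab)

lemma exists_Φ {n : SimplexCategory} (x : X.obj (op n)) :
    ∃ f : C(stdSimplex ℝ (Fin (n.len + 1)) × stdSimplex ℝ (Fin 2), SSet.toTop.obj Z),
      ∀ a, f (E n a) = H.Efun x a :=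
  ⟨Topology.IsQuotientMap.lift (f := ⟨E n, (E_quot n).continuous⟩) (E_quot n) (H.EfunC x)
    (fun a b hab => H.Efun_eq x a b hab),
    fun a => ContinuousMap.congr_fun (Topology.IsQuotientMap.lift_comp
      (f := ⟨E n, (E_quot n).continuous⟩) (E_quot n) (H.EfunC x)
      (fun a b hab => H.Efun_eq x a b hab)) a⟩

noncomputable def Φ {n : SimplexCategory} (x : X.obj (op n)) :
    C(stdSimplex ℝ (Fin (n.len + 1)) × stdSimplex ℝ (Fin 2), SSet.toTop.obj Z) :=
  (H.exists_Φ x).choose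

lemma Φ_apply {n N : SimplexCategory} (x : X.obj (op n)) (φ : N ⟶ n) (χ : N ⟶ ⦋1⦌)
    (p : stdSimplex ℝ (Fin (N.len + 1))) :
    H.Φ x (stdSimplex.map φ.toOrderHom p, stdSimplex.map χ.toOrderHom p) = ev (H.y x φ χ) p := by
  obtain ⟨a, ha⟩ := (E_quot n).surjective
    (stdSimplex.map φ.toOrderHom p, stdSimplex.map χ.toOrderHom p)
  rw [← ha]
  rw [show H.Φ x (E n a) = H.Efun x a from (H.exists_Φ x).choose_spec a]
  exact H.val_eq x _ _ _ _ _ _ (congrArg Prod.fst ha) (congrArg Prod.snd ha)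

lemma Φ_nat {m n : SimplexCategory} (x : X.obj (op n)) (θ : m ⟶ n)
    (t : stdSimplex ℝ (Fin (m.len + 1))) (s : stdSimplex ℝ (Fin 2)) :
    H.Φ (X.map θ.op x) (t, s) = H.Φ x (stdSimplex.map θ.toOrderHom t, s) := by
  obtain ⟨i, p, h⟩ := surj (n := m) (t, s)
  obtain ⟨rfl, rfl⟩ := Prod.ext_iff.1 h
  have e1 := H.Φ_apply (N := ⦋m.len + 1⦌) (X.map θ.op x) (SimplexCategory.Hom.mk i.1)
    (SimplexCategory.Hom.mk (b := ⦋1⦌) i.2) p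
  have e2 := H.Φ_apply (N := ⦋m.len + 1⦌) x (SimplexCategory.Hom.mk i.1 ≫ θ)
    (SimplexCategory.Hom.mk (b := ⦋1⦌) i.2) p
  rw [H.hx, ← e2] at e1
  rw [stdSimplex.map_comp_apply]
  exact e1

/-- The adjoint map to the singular complex of the path space. -/
noncomputable def toSing : X ⟶ TopCat.toSSet.obj
    (TopCat.of C(stdSimplex ℝ (Fin 2), SSet.toTop.obj Z)) where
  app n := ↾fun x => (TopCat.toSSetObjEquiv _ n).symm (H.Φ (n := n.unop) x).curry
  naturality n m θ := by
    ext x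
    apply (TopCat.toSSetObjEquiv _ m).injective
    ext t s
    exact H.Φ_nat x θ.unop t s

noncomputable def pathMap : SSet.toTop.obj X ⟶
    TopCat.of C(stdSimplex ℝ (Fin 2), SSet.toTop.obj Z) :=
  (sSetTopAdj.homEquiv _ _).symm H.toSing

lemma pathMap_comp (s : stdSimplex ℝ (Fin 2)) (K : X ⟶ Z)
    (hK : ∀ {n : SimplexCategory} (x : X.obj (op n)) t, H.Φ x (t, s) = ev (K.app (op n) x) t) :
    H.pathMap ≫ TopCat.ofHom ⟨fun f : C(stdSimplex ℝ (Fin 2), SSet.toTop.obj Z) => f s, by fun_prop⟩ =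
      SSet.toTop.map K := by
  apply (sSetTopAdj.homEquiv _ _).injective
  rw [Adjunction.homEquiv_naturality_right, pathMap, Equiv.apply_symm_apply,
    Adjunction.homEquiv_unit]
  have : sSetTopAdj.unit.app X ≫ TopCat.toSSet.map (SSet.toTop.map K) =
    K ≫ sSetTopAdj.unit.app Z := (sSetTopAdj.unit.naturality K).symm
  rw [this]
  ext n x
  apply (TopCat.toSSetObjEquiv _ n).injective
  ext t
  exact hK (n := n.unop) x t

lemma Φ_zero {n : SimplexCategory} (x : X.obj (op n)) (t) (i : Fin 2) :
    H.Φ x (t, stdSimplex.vertex i) =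
      ev (H.y x (𝟙 n) (SimplexCategory.Hom.mk (b := ⦋1⦌) (OrderHom.const _ i))) t := by
  rw [← H.Φ_apply]
  congr 2
  · exact (stdSimplex.map_id_apply t).symm
  · ext j
    change _ = stdSimplex.map (fun _ => i) t j
    rw [map_apply']
    by_cases h : i = j
    · subst h; simp
    · simp [h, Ne.symm h]

lemma homotopic (H : Prism F G) : ContinuousMap.Homotopic (SSet.toTop.map F).hom (SSet.toTop.map G).hom := by
  have p0 := H.pathMap_comp (stdSimplex.vertex 0) F fun x t => by rw [H.Φ_zero, H.h0]
  have p1 := H.pathMap_comp (stdSimplex.vertex 1) G fun x t => by rw [H.Φ_zero, H.h1]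
  refine ⟨⟨⟨fun q => (H.pathMap.hom q.2) (stdSimplexHomeomorphUnitInterval.symm q.1), ?_⟩, ?_, ?_⟩⟩
  · have : Continuous fun q : unitInterval × SSet.toTop.obj X =>
      ((H.pathMap.hom q.2 : C(stdSimplex ℝ (Fin 2), SSet.toTop.obj Z)),
        stdSimplexHomeomorphUnitInterval.symm q.1) := by fun_prop
    exact ContinuousEval.continuous_eval.comp this
  · intro a
    have e : stdSimplexHomeomorphUnitInterval.symm 0 = stdSimplex.vertex 0 := by
      rw [Homeomorph.symm_apply_eq]; rfl
    rw [← p0]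
    simp only [e]
    rfl
  · intro a
    have e : stdSimplexHomeomorphUnitInterval.symm 1 = stdSimplex.vertex 1 := by
      rw [Homeomorph.symm_apply_eq]; rfl
    rw [← p1]
    simp only [e]
    rfl

end Prism

end DiagInit

namespace DiagInit

open Opposite Simplicial

/-- A natural transformation as a functor `[N] × C ⥤ D` restricted along a pair of maps. -/
def prismObj {C D : Type} [Category.{0} C] [Category.{0} D] {F G : C ⥤ D} (τ : F ⟶ G)
    {n N : SimplexCategory} (x : (nerve C).obj (op n)) (φ : N ⟶ n) (χ : N ⟶ ⦋1⦌) :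
    (nerve D).obj (op N) :=
  Functor.prod' (χ.toOrderHom.monotone.functor)
    (φ.toOrderHom.monotone.functor ⋙ (x : ComposableArrows C n.len)) ⋙
    Functor.uncurry.obj (ComposableArrows.mk₁ τ)

def nervePrism {C D : Type} [Category.{0} C] [Category.{0} D] {F G : C ⥤ D} (τ : F ⟶ G) :
    Prism (nerveMap F) (nerveMap G) where
  y := prismObj τ
  hy _ _ _ _ := rfl
  hx _ _ _ _ := rfl
  h0 {n} x := by
    refine CategoryTheory.Functor.hext (fun _ => rfl) (fun i j f => heq_of_eq ?_)
    change ((ComposableArrows.mk₁ τ).map (𝟙 0)).app _ ≫ ((ComposableArrows.mk₁ τ).obj 0).map _ = _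
    rw [CategoryTheory.Functor.map_id, NatTrans.id_app, Category.id_comp]
    rfl
  h1 {n} x := by
    refine CategoryTheory.Functor.hext (fun _ => rfl) (fun i j f => heq_of_eq ?_)
    change ((ComposableArrows.mk₁ τ).map (𝟙 1)).app _ ≫ ((ComposableArrows.mk₁ τ).obj 1).map _ = _
    rw [CategoryTheory.Functor.map_id, NatTrans.id_app, Category.id_comp]
    rfl

lemma const_toTop (X Y : SSet.{0}) (y : Y _⦋0⦌) :
    ∃ v, (SSet.toTop.map (SSet.const (X := X) y)).hom = ContinuousMap.const _ v := by
  let f : X ⟶ Δ[0] := SSet.const (SSet.stdSimplex.objEquiv.symm (𝟙 _))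
  let g : Δ[0] ⟶ Y := SSet.yonedaEquiv.symm y
  have h : SSet.const (X := X) y = f ≫ g := by
    have hg : g.app (op ⦋0⦌) (SSet.stdSimplex.objEquiv.symm (𝟙 _)) = y :=
      SSet.yonedaEquiv.apply_symm_apply y
    ext n x
    change Y.map (n.unop.const _ 0).op y = g.app n (Δ[0].map (n.unop.const _ 0).op
      (SSet.stdSimplex.objEquiv.symm (𝟙 _)))
    refine Eq.trans ?_ (nat_app g _ _).symm
    rw [hg]
  refine ⟨(SSet.toTop.map g).hom default, ?_⟩
  rw [h, Functor.map_comp]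
  ext a
  change (SSet.toTop.map g).hom ((SSet.toTop.map f).hom a) = (SSet.toTop.map g).hom default
  rw [Subsingleton.elim ((SSet.toTop.map f).hom a) default]

lemma nerve_contr {C : Type} [Category.{0} C] (F : C ⥤ C) (c : C) (α : 𝟭 C ⟶ F)
    (β : (Functor.const C).obj c ⟶ F) : WeaklyContractibleSSet (nerve C) := by
  have h1 := (nervePrism α).homotopic
  have h2 := (nervePrism β).homotopic
  have e1 : nerveMap (𝟭 C) = 𝟙 (nerve C) := rfl
  have e2 : nerveMap ((Functor.const C).obj c) = SSet.const (ComposableArrows.mk₀ c) := by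
    ext n x
    refine CategoryTheory.Functor.hext (fun _ => rfl) (fun i j f => heq_of_eq ?_)
    exact (CategoryTheory.Functor.map_id (ComposableArrows.mk₀ c) (0 : Fin 1)).symm
  obtain ⟨v, hv⟩ := const_toTop (nerve C) (nerve C) (ComposableArrows.mk₀ c)
  rw [e1, CategoryTheory.Functor.map_id] at h1
  rw [e2, hv] at h2
  have : ContractibleSpace (SSet.toTop.obj (nerve C)) :=
    (contractible_iff_id_nullhomotopic _).2 ⟨v, h1.trans h2.symm⟩
  exact ContractibleSpace.hequiv _ _

lemma conn {C : Type} [Category.{0} C] (F : C ⥤ C) (c : C) (α : 𝟭 C ⟶ F)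
    (β : (Functor.const C).obj c ⟶ F) : IsConnected C := by
  have : Nonempty C := ⟨c⟩
  have h : ∀ x, Zigzag x c := fun x =>
    (Zigzag.of_hom (α.app x)).trans (Zigzag.of_inv (β.app x))
  exact zigzag_isConnected fun x y => (h x).trans (h y).symm

open SimplexCategory

/-- Prepend a vertex. -/
def consMap {m n : ℕ} (f : Fin (m + 1) →o Fin (n + 1)) : Fin (m + 2) →o Fin (n + 1) :=
  ⟨Fin.cons 0 f, by
    intro a b h
    induction a using Fin.cases with
    | zero => simp
    | succ a =>
      induction b using Fin.cases with
      | zero => simp at h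
      | succ b => simpa using f.monotone (by simpa using h)⟩

/-- Shift a map. -/
def shiftMap {m n : ℕ} (f : Fin (m + 1) →o Fin (n + 1)) : Fin (m + 2) →o Fin (n + 2) :=
  ⟨Fin.cons 0 (fun i => (f i).succ), by
    intro a b h
    induction a using Fin.cases with
    | zero => simp
    | succ a =>
      induction b using Fin.cases with
      | zero => simp at h
      | succ b => simpa using f.monotone (by simpa using h)⟩

lemma cons_shift {l m n : ℕ} (f : Fin (l + 1) →o Fin (m + 1)) (g : Fin (m + 1) →o Fin (n + 1)) :
    (consMap g).comp (shiftMap f) = consMap (g.comp f) := by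
  ext i
  induction i using Fin.cases <;> rfl

lemma shift_comp {l m n : ℕ} (f : Fin (l + 1) →o Fin (m + 1)) (g : Fin (m + 1) →o Fin (n + 1)) :
    shiftMap (g.comp f) = (shiftMap g).comp (shiftMap f) := by
  ext i
  induction i using Fin.cases <;> rfl

lemma shift_id {l : ℕ} : shiftMap (OrderHom.id : Fin (l + 1) →o Fin (l + 1)) = OrderHom.id := by
  ext i
  induction i using Fin.cases <;> rfl

variable (k₁ k₂ : ℕ)

abbrev CC := CostructuredArrow (Functor.diag SimplexCategory) (mk k₁, mk k₂)

def pre : CC k₁ k₂ ⥤ CC k₁ k₂ where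
  obj X := CostructuredArrow.mk (Y := mk (X.left.len + 1))
    ((Hom.mk (consMap X.hom.1.toOrderHom), Hom.mk (consMap X.hom.2.toOrderHom)) :
      (Functor.diag SimplexCategory).obj (mk (X.left.len + 1)) ⟶ (mk k₁, mk k₂))
  map {X Y} f := CostructuredArrow.homMk (Hom.mk (shiftMap f.left.toOrderHom)) (by
    have h := CostructuredArrow.w f
    obtain ⟨h1, h2⟩ := Prod.ext_iff.1 h
    apply Prod.ext
    · apply SimplexCategory.Hom.ext
      rw [← h1]
      exact cons_shift _ _
    · apply SimplexCategory.Hom.ext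
      rw [← h2]
      exact cons_shift _ _)
  map_id X := by
    apply CostructuredArrow.hom_ext
    apply SimplexCategory.Hom.ext
    exact shift_id
  map_comp f g := by
    apply CostructuredArrow.hom_ext
    apply SimplexCategory.Hom.ext
    exact shift_comp _ _

def α : 𝟭 (CC k₁ k₂) ⟶ pre k₁ k₂ where
  app X := CostructuredArrow.homMk (Hom.mk (b := mk (X.left.len + 1)) ⟨Fin.succ, by
      intro a b h; simpa using h⟩) (by
    apply Prod.ext
    · apply SimplexCategory.Hom.ext
      ext i
      rfl
    · apply SimplexCategory.Hom.ext
      ext i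
      rfl)
  naturality X Y f := by
    apply CostructuredArrow.hom_ext
    apply SimplexCategory.Hom.ext
    ext i
    rfl

def base : CC k₁ k₂ := CostructuredArrow.mk (Y := mk 0)
    ((Hom.mk (OrderHom.const _ 0), Hom.mk (OrderHom.const _ 0)) :
      (Functor.diag SimplexCategory).obj (mk 0) ⟶ (mk k₁, mk k₂))

def β : (Functor.const (CC k₁ k₂)).obj (base k₁ k₂) ⟶ pre k₁ k₂ where
  app X := CostructuredArrow.homMk (Hom.mk (a := mk 0) (b := mk (X.left.len + 1))
      (OrderHom.const _ 0)) (by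
    apply Prod.ext
    · apply SimplexCategory.Hom.ext
      ext i
      rfl
    · apply SimplexCategory.Hom.ext
      ext i
      rfl)
  naturality X Y f := by
    apply CostructuredArrow.hom_ext
    apply SimplexCategory.Hom.ext
    ext i
    rfl

end DiagInit

/-- For every pair `([k₁],[k₂])` of objects of `Δ × Δ`, the nerve of the comma
category `(diag ↓ ([k₁],[k₂]))` of the diagonal functor `diag : Δ → Δ × Δ` is
weakly contractible; consequently the diagonal functor is initial. -/
theorem diag_comma_nerve_contractible_and_initial :
    (∀ k₁ k₂ : ℕ,
      WeaklyContractibleSSet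
        (CategoryTheory.nerve
          (CostructuredArrow (Functor.diag SimplexCategory) (mk k₁, mk k₂)))) ∧
    (Functor.diag SimplexCategory).Initial := by
  refine ⟨fun k₁ k₂ => DiagInit.nerve_contr _ _ (DiagInit.α k₁ k₂) (DiagInit.β k₁ k₂), ⟨?_⟩⟩
  rintro ⟨X, Y⟩
  exact DiagInit.conn _ _ (DiagInit.α X.len Y.len) (DiagInit.β X.len Y.len)
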